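/- arXiv:2105.03805 — 2 statements merged into one kernel-verified Lean document; each statement's English description precedes it below -/
import Mathlib

section
/- Let μ₁ < 0 and let n ≥ 2 be an integer. Suppose h ∈ C²((0,∞)) ∩ C¹([0,∞)) is a solution of the steady equation 2r²h(r)h''(r) = (n-1)h(r)(h(r)-1) + r h'(r)(r h'(r) - (n-1)), h(r) > 0 for r > 0, with h(0) = 1 and h'(0) = μ₁. Then the limit b₁ := lim_{r→∞} r h(r) exists and lies in [0,∞), with b₁ > 0 when n ≥ 4. Moreover lim_{r→∞} r(r h'(r)/h(r) + 1) = ((n-4)/(n-1)) · b₁. -/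
open Set Filter Topology

/-- `h` is a solution of the steady equation
`2r²h h'' = (n-1)h(h-1) + r h'(r h' - (n-1))`, `h > 0` on `(0,∞)`,
with `h ∈ C²((0,∞)) ∩ C¹([0,∞))`, `h(0) = 1` and `h'(0) = μ₁`. -/
def IsSteadySol (n : ℕ) (μ₁ : ℝ) (h : ℝ → ℝ) : Prop :=
  ContDiffOn ℝ 2 h (Set.Ioi 0) ∧ ContDiffOn ℝ 1 h (Set.Ici 0) ∧
  (∀ r : ℝ, 0 < r →
    2 * r ^ 2 * h r * deriv (deriv h) r =
      ((n : ℝ) - 1) * h r * (h r - 1) +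
        r * deriv h r * (r * deriv h r - ((n : ℝ) - 1)) ∧ 0 < h r) ∧
  h 0 = 1 ∧ derivWithin h (Set.Ici 0) 0 = μ₁

/-!
Put `t = log r`, `m = n - 1`, `H t = h r` and `z t = (r h)' / h²`. The steady equation becomes the
autonomous planar system
`H' = (z H - 1) H`, `2 H z' = m (1 - z) - 3 (1 - z H)²`.
Every level `z = K > 1` is a barrier, so `z H` stays below some `P < 1` and `H → 0`. Since
`z H² = (r h)'` is eventually larger than any negative constant, `z` is also bounded below. Then
`z H → 0`, and the second equation relaxes `z` to `(m - 3) / m`. Finally `log (r h)` has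
`t`-derivative `z H = O(H) = O(-H')`, which is integrable; hence `r h` has a positive limit `b₁`,
and `r (r h' / h + 1) = z · (r h) → ((m - 3) / m) b₁`.
-/

open MeasureTheory

section DifferentialInequalities

variable {f f' : ℝ → ℝ} {a c δ : ℝ}

lemma le_of_hasDerivAt_neg_of_eq (hf : ∀ t, a ≤ t → HasDerivAt f (f' t) t) (ha : f a ≤ δ)
    (hneg : ∀ t, a ≤ t → f t = δ → f' t < 0) {t : ℝ} (ht : a ≤ t) : f t ≤ δ :=
  image_le_of_deriv_right_lt_deriv_boundary (B := fun _ ↦ δ) (B' := fun _ ↦ 0)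
    (fun s hs ↦ (hf s hs.1).continuousAt.continuousWithinAt)
    (fun s hs ↦ (hf s hs.1).hasDerivWithinAt) ha (fun s ↦ hasDerivAt_const s δ)
    (fun s hs ↦ hneg s hs.1) ⟨ht, le_rfl⟩

lemma exists_ge_le_of_hasDerivAt_le_neg (hc : 0 < c)
    (hf : ∀ t, a ≤ t → HasDerivAt f (f' t) t) (hle : ∀ t, a ≤ t → δ ≤ f t → f' t ≤ -c) :
    ∃ t, a ≤ t ∧ f t ≤ δ := by
  by_contra! hgt
  have linear_bound : ∀ t, a ≤ t → f t - f a ≤ -c * (t - a) := fun t ht ↦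
    (convex_Ici a).image_sub_le_mul_sub_of_deriv_le
      (fun s hs ↦ (hf s hs).continuousAt.continuousWithinAt)
      (fun s hs ↦ (hf s (interior_subset hs)).differentiableAt.differentiableWithinAt)
      (fun s hs ↦ (hf s (interior_subset hs)).deriv ▸
        hle s (interior_subset hs) (hgt s (interior_subset hs)).le)
      a self_mem_Ici t ht ht
  have hδ : 0 < f a - δ := sub_pos.2 (hgt a le_rfl)
  have ht : a ≤ a + (f a - δ) / c := by linarith [div_pos hδ hc]
  have hdrop := linear_bound _ ht
  rw [add_sub_cancel_left, neg_mul, mul_div_cancel₀ _ hc.ne'] at hdrop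
  linarith [hgt _ ht]

lemma eventually_le_of_hasDerivAt_le_neg (hc : 0 < c)
    (hf : ∀ᶠ t in atTop, HasDerivAt f (f' t) t)
    (hle : ∀ᶠ t in atTop, δ ≤ f t → f' t ≤ -c) : ∀ᶠ t in atTop, f t ≤ δ := by
  obtain ⟨T, hT⟩ := eventually_atTop.1 (hf.and hle)
  obtain ⟨b, hTb, hb⟩ := exists_ge_le_of_hasDerivAt_le_neg hc
    (fun t ht ↦ (hT t ht).1) (fun t ht ↦ (hT t ht).2)
  filter_upwards [eventually_ge_atTop b] with t ht
  refine le_of_hasDerivAt_neg_of_eq (fun s hs ↦ (hT s (hTb.trans hs)).1) hb (fun s hs heq ↦ ?_) ht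
  linarith [(hT s (hTb.trans hs)).2 heq.ge]

lemma eventually_ge_of_le_hasDerivAt (hc : 0 < c)
    (hf : ∀ᶠ t in atTop, HasDerivAt f (f' t) t)
    (hle : ∀ᶠ t in atTop, f t ≤ δ → c ≤ f' t) : ∀ᶠ t in atTop, δ ≤ f t := by
  have hneg : ∀ᶠ t in atTop, -f t ≤ -δ :=
    eventually_le_of_hasDerivAt_le_neg hc (hf.mono fun t ht ↦ ht.fun_neg)
      (hle.mono fun t ht hδ ↦ neg_le_neg (ht (neg_le_neg_iff.1 hδ)))
  exact hneg.mono fun t ht ↦ neg_le_neg_iff.1 ht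

lemma tendsto_of_hasDerivAt_mul_sub {u v : ℝ → ℝ} {α l : ℝ} (hα : 0 < α)
    (hu : ∀ᶠ t in atTop, α ≤ u t) (hv : Tendsto v atTop (𝓝 l))
    (hf : ∀ᶠ t in atTop, HasDerivAt f (u t * (v t - f t)) t) : Tendsto f atTop (𝓝 l) := by
  refine tendsto_order.2 ⟨fun x hx ↦ ?_, fun x hx ↦ ?_⟩
  · obtain ⟨y, hxy, hyl⟩ := exists_between hx
    obtain ⟨w, hyw, hwl⟩ := exists_between hyl
    have hy : ∀ᶠ t in atTop, y ≤ f t := by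
      refine eventually_ge_of_le_hasDerivAt (mul_pos hα (sub_pos.2 hyw)) hf ?_
      filter_upwards [hu, hv.eventually_const_lt hwl] with t hut hvt hft
      exact mul_le_mul hut (by linarith) (by linarith) (hα.le.trans hut)
    exact hy.mono fun t ht ↦ hxy.trans_le ht
  · obtain ⟨y, hly, hyx⟩ := exists_between hx
    obtain ⟨w, hlw, hwy⟩ := exists_between hly
    have hy : ∀ᶠ t in atTop, f t ≤ y := by
      refine eventually_le_of_hasDerivAt_le_neg (mul_pos hα (sub_pos.2 hwy)) hf ?_
      filter_upwards [hu, hv.eventually_lt_const hlw] with t hut hvt hft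
      have : α * (y - w) ≤ u t * (f t - v t) :=
        mul_le_mul hut (by linarith) (by linarith) (hα.le.trans hut)
      linarith
    exact hy.mono fun t ht ↦ ht.trans_lt hyx

lemma exists_tendsto_of_norm_deriv_le_neg_deriv {E : Type*} [NormedAddCommGroup E]
    [NormedSpace ℝ E] [CompleteSpace E] {F F' : ℝ → E} {l : ℝ}
    (hF : ∀ᶠ t in atTop, HasDerivAt F (F' t) t) (hf : ∀ᶠ t in atTop, HasDerivAt f (f' t) t)
    (hle : ∀ᶠ t in atTop, ‖F' t‖ ≤ -f' t) (hlim : Tendsto f atTop (𝓝 l)) :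
    ∃ L, Tendsto F atTop (𝓝 L) := by
  obtain ⟨T, hT⟩ := eventually_atTop.1 (hF.and (hf.and hle))
  have hf'_int : IntegrableOn f' (Ioi T) :=
    integrableOn_Ioi_deriv_of_nonpos' (fun t ht ↦ (hT t ht).2.1)
      (fun t ht ↦ neg_nonneg.1 ((norm_nonneg _).trans (hT t (le_of_lt ht)).2.2)) hlim
  have hF'_meas : AEStronglyMeasurable F' (volume.restrict (Ioi T)) :=
    (aestronglyMeasurable_deriv F _).congr <| (ae_restrict_mem measurableSet_Ioi).mono
      fun t ht ↦ (hT t (le_of_lt ht)).1.deriv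
  have hF'_int : IntegrableOn F' (Ioi T) :=
    hf'_int.neg.mono' hF'_meas <| (ae_restrict_mem measurableSet_Ioi).mono
      fun t ht ↦ (hT t (le_of_lt ht)).2.2
  exact ⟨_, tendsto_limUnder_of_hasDerivAt_of_integrableOn_Ioi
    (fun t ht ↦ (hT t (le_of_lt ht)).1) hF'_int⟩

lemma eventually_lt_and_deriv_neg_of_derivWithin_neg (hf : ContDiffOn ℝ 1 f (Ici a))
    (hneg : derivWithin f (Ici a) a < 0) : ∀ᶠ x in 𝓝[>] a, f x < f a ∧ deriv f x < 0 := by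
  have hderiv : ∀ᶠ x in 𝓝[≥] a, derivWithin f (Ici a) x < 0 :=
    (hf.continuousOn_derivWithin (uniqueDiffOn_Ici a) le_rfl a self_mem_Ici).eventually_lt_const
      hneg
  obtain ⟨b, hab, hb⟩ := mem_nhdsGE_iff_exists_Icc_subset.1 hderiv
  have hderiv_neg : ∀ x ∈ Ioc a b, deriv f x < 0 := fun x hx ↦
    derivWithin_of_mem_nhds (f := f) (Ici_mem_nhds hx.1) ▸ hb (Ioc_subset_Icc_self hx)
  have hanti : StrictAntiOn f (Icc a b) :=
    strictAntiOn_of_deriv_neg (convex_Icc a b) (hf.continuousOn.mono Icc_subset_Ici_self)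
      fun x hx ↦ hderiv_neg x (Ioo_subset_Ioc_self (interior_Icc (a := a) ▸ hx))
  filter_upwards [Ioc_mem_nhdsGT hab] with x hx
  exact ⟨hanti (left_mem_Icc.2 hab.le) (Ioc_subset_Icc_self hx) hx.1, hderiv_neg x hx⟩

end DifferentialInequalities

/-- The planar system for `H t = h (exp t)` and `z t = (r h)' / h²` at `r = exp t` that is
equivalent to the steady equation with `m = n - 1`, on the half-line `[t₀, ∞)`. -/
structure IsSteadyFlow (m t₀ : ℝ) (H z : ℝ → ℝ) : Prop where
  pos : ∀ t, t₀ ≤ t → 0 < H t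
  hasDerivAt_profile : ∀ t, t₀ ≤ t → HasDerivAt H ((z t * H t - 1) * H t) t
  hasDerivAt_ratio : ∀ t, t₀ ≤ t →
    HasDerivAt z ((m * (1 - z t) - 3 * (1 - z t * H t) ^ 2) / (2 * H t)) t

namespace IsSteadyFlow

variable {m t₀ : ℝ} {H z : ℝ → ℝ}

lemma eventually_pos (hflow : IsSteadyFlow m t₀ H z) : ∀ᶠ t in atTop, 0 < H t :=
  (eventually_ge_atTop t₀).mono hflow.pos

lemma eventually_hasDerivAt_profile (hflow : IsSteadyFlow m t₀ H z) :
    ∀ᶠ t in atTop, HasDerivAt H ((z t * H t - 1) * H t) t :=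
  (eventually_ge_atTop t₀).mono hflow.hasDerivAt_profile

lemma eventually_hasDerivAt_ratio (hflow : IsSteadyFlow m t₀ H z) :
    ∀ᶠ t in atTop, HasDerivAt z ((m * (1 - z t) - 3 * (1 - z t * H t) ^ 2) / (2 * H t)) t :=
  (eventually_ge_atTop t₀).mono hflow.hasDerivAt_ratio

lemma ratio_le (hflow : IsSteadyFlow m t₀ H z) (hm : 0 < m) {K : ℝ} (hK : 1 < K)
    (hz : z t₀ ≤ K) {t : ℝ} (ht : t₀ ≤ t) : z t ≤ K := by
  refine le_of_hasDerivAt_neg_of_eq hflow.hasDerivAt_ratio hz (fun s hs hzs ↦ ?_) ht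
  refine div_neg_of_neg_of_pos ?_ (mul_pos two_pos (hflow.pos s hs))
  rw [hzs]
  have hlinear : m * (1 - K) < 0 := mul_neg_of_pos_of_neg hm (sub_neg.2 hK)
  linarith [sq_nonneg (1 - K * H s)]

lemma profile_le (hflow : IsSteadyFlow m t₀ H z) {K : ℝ} (hz : ∀ t, t₀ ≤ t → z t ≤ K)
    (hK : K * H t₀ < 1) {t : ℝ} (ht : t₀ ≤ t) : H t ≤ H t₀ := by
  refine le_of_hasDerivAt_neg_of_eq hflow.hasDerivAt_profile le_rfl (fun s hs hHs ↦ ?_) ht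
  have hzH : z s * H t₀ ≤ K * H t₀ :=
    mul_le_mul_of_nonneg_right (hz s hs) (hflow.pos t₀ le_rfl).le
  rw [hHs]
  exact mul_neg_of_neg_of_pos (by linarith) (hflow.pos t₀ le_rfl)

lemma exists_ratio_le_and_ratio_mul_profile_le (hflow : IsSteadyFlow m t₀ H z) (hm : 0 < m)
    (hH : H t₀ < 1) (hzH : z t₀ * H t₀ < 1) :
    ∃ K P : ℝ, P < 1 ∧ ∀ t, t₀ ≤ t → z t ≤ K ∧ z t * H t ≤ P := by
  have hH₀ : 0 < H t₀ := hflow.pos t₀ le_rfl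
  obtain ⟨K, hK, hKH⟩ : ∃ K, max 1 (z t₀) < K ∧ K < 1 / H t₀ :=
    exists_between (max_lt ((one_lt_div hH₀).2 hH) ((lt_div_iff₀ hH₀).2 hzH))
  obtain ⟨hK_one, hzK⟩ := max_lt_iff.1 hK
  have hz : ∀ t, t₀ ≤ t → z t ≤ K := fun t ht ↦ hflow.ratio_le hm hK_one hzK.le ht
  have hKH_lt : K * H t₀ < 1 := (lt_div_iff₀ hH₀).1 hKH
  refine ⟨K, K * H t₀, hKH_lt, fun t ht ↦ ⟨hz t ht, ?_⟩⟩
  exact mul_le_mul (hz t ht) (hflow.profile_le hz hKH_lt ht) (hflow.pos t ht).le (by linarith)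

lemma tendsto_profile (hflow : IsSteadyFlow m t₀ H z) {P : ℝ} (hP : P < 1)
    (hzH : ∀ᶠ t in atTop, z t * H t ≤ P) : Tendsto H atTop (𝓝 0) := by
  refine tendsto_order.2 ⟨fun x hx ↦ hflow.eventually_pos.mono fun t ht ↦ hx.trans ht,
    fun x hx ↦ ?_⟩
  obtain ⟨δ, hδ, hδx⟩ := exists_between hx
  have hHδ : ∀ᶠ t in atTop, H t ≤ δ := by
    refine eventually_le_of_hasDerivAt_le_neg (mul_pos (sub_pos.2 hP) hδ)
      hflow.eventually_hasDerivAt_profile ?_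
    filter_upwards [hzH] with t ht hδH
    have : (1 - P) * δ ≤ (1 - z t * H t) * H t :=
      mul_le_mul (by linarith) hδH hδ.le (by linarith)
    linarith
  exact hHδ.mono fun t ht ↦ ht.trans_lt hδx

lemma hasDerivAt_ratio_mul_profile_sq (hflow : IsSteadyFlow m t₀ H z) {t : ℝ} (ht : t₀ ≤ t) :
    HasDerivAt (fun s ↦ z s * H s ^ 2)
      ((H t * ((z t * H t + 1) ^ 2 + m - 4) - m * (z t * H t)) / 2) t := by
  have hH := (hflow.pos t ht).ne'
  refine ((hflow.hasDerivAt_ratio t ht).fun_mul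
    ((hflow.hasDerivAt_profile t ht).fun_pow 2)).congr_deriv ?_
  field_simp
  ring

lemma eventually_neg_le_ratio_mul_profile_sq (hflow : IsSteadyFlow m t₀ H z) (hm : 0 < m)
    (hH : Tendsto H atTop (𝓝 0)) {ε : ℝ} (hε : 0 < ε) :
    ∀ᶠ t in atTop, -ε ≤ z t * H t ^ 2 := by
  refine eventually_ge_of_le_hasDerivAt (mul_pos two_pos hm)
    ((eventually_ge_atTop t₀).mono fun t ht ↦ hflow.hasDerivAt_ratio_mul_profile_sq ht) ?_
  filter_upwards [hflow.eventually_pos, hH.eventually_lt_const (div_pos hε four_pos)]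
    with t hpos hsmall hle
  have hzH : z t * H t ≤ -4 := by
    by_contra! hlt
    have : -4 * H t < z t * H t * H t := mul_lt_mul_of_pos_right hlt hpos
    linarith [show z t * H t ^ 2 = z t * H t * H t by ring]
  have hbracket : 0 ≤ H t * ((z t * H t + 1) ^ 2 + m - 4) :=
    mul_nonneg hpos.le (by nlinarith)
  have hdrift : m * (z t * H t) ≤ m * -4 := mul_le_mul_of_nonneg_left hzH hm.le
  linarith

lemma eventually_neg_le_ratio (hflow : IsSteadyFlow m t₀ H z) (hm : 0 < m)
    (hH : Tendsto H atTop (𝓝 0)) : ∀ᶠ t in atTop, -(12 / m) ≤ z t := by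
  refine eventually_ge_of_le_hasDerivAt (half_pos hm) hflow.eventually_hasDerivAt_ratio ?_
  filter_upwards [hflow.eventually_pos, hH.eventually_lt_const one_pos,
    hflow.eventually_neg_le_ratio_mul_profile_sq hm hH (ε := m / 12) (by positivity)]
    with t hpos hlt_one hσ hz
  have hmz : m * z t ≤ -12 := by
    have := mul_le_mul_of_nonneg_left hz hm.le
    rwa [mul_neg, mul_div_cancel₀ _ hm.ne'] at this
  have hz_neg : z t ≤ 0 := hz.trans (neg_nonpos.2 (by positivity))
  have hsq : (z t * H t) ^ 2 ≤ -(m * z t) / 12 := by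
    calc (z t * H t) ^ 2 = z t * (z t * H t ^ 2) := by ring
      _ ≤ z t * -(m / 12) := mul_le_mul_of_nonpos_left hσ hz_neg
      _ = -(m * z t) / 12 := by ring
  have hsq_one_sub : (1 - z t * H t) ^ 2 ≤ 2 + 2 * (z t * H t) ^ 2 := by
    nlinarith [sq_nonneg (1 + z t * H t)]
  have hnumerator : m ≤ m * (1 - z t) - 3 * (1 - z t * H t) ^ 2 := by linarith
  calc m / 2 ≤ m / (2 * H t) := div_le_div_of_nonneg_left hm.le (by positivity) (by linarith)
    _ ≤ (m * (1 - z t) - 3 * (1 - z t * H t) ^ 2) / (2 * H t) := by gcongr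

lemma exists_eventually_abs_ratio_le (hflow : IsSteadyFlow m t₀ H z) (hm : 0 < m)
    (hH : Tendsto H atTop (𝓝 0)) {K : ℝ} (hz : ∀ᶠ t in atTop, z t ≤ K) :
    ∃ C, ∀ᶠ t in atTop, |z t| ≤ C := by
  refine ⟨max (12 / m) K, ?_⟩
  filter_upwards [hz, hflow.eventually_neg_le_ratio hm hH] with t hle hge
  exact abs_le'.2 ⟨hle.trans (le_max_right _ _), (neg_le.1 hge).trans (le_max_left _ _)⟩

lemma tendsto_ratio (hflow : IsSteadyFlow m t₀ H z) (hm : 0 < m)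
    (hH : Tendsto H atTop (𝓝 0)) {C : ℝ} (hz : ∀ᶠ t in atTop, |z t| ≤ C) :
    Tendsto z atTop (𝓝 ((m - 3) / m)) := by
  have hzH : Tendsto (fun t ↦ z t * H t) atTop (𝓝 0) :=
    bdd_le_mul_tendsto_zero' C hz hH
  have hequilibrium : Tendsto (fun t ↦ (m - 3 * (1 - z t * H t) ^ 2) / m) atTop
      (𝓝 ((m - 3) / m)) := by
    simpa only [sub_zero, one_pow, mul_one] using
      ((((hzH.const_sub 1).pow 2).const_mul 3).const_sub m).div_const m
  have hrate : ∀ᶠ t in atTop, m / 2 ≤ m / (2 * H t) := by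
    filter_upwards [hflow.eventually_pos, hH.eventually_lt_const one_pos] with t hpos hlt
    exact div_le_div_of_nonneg_left hm.le (by positivity) (by linarith)
  refine tendsto_of_hasDerivAt_mul_sub (half_pos hm) hrate hequilibrium ?_
  filter_upwards [hflow.eventually_pos, hflow.eventually_hasDerivAt_ratio] with t hpos hderiv
  refine hderiv.congr_deriv ?_
  field_simp
  ring

lemma hasDerivAt_add_log_profile (hflow : IsSteadyFlow m t₀ H z) {t : ℝ} (ht : t₀ ≤ t) :
    HasDerivAt (fun s ↦ s + Real.log (H s)) (z t * H t) t := by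
  have hH := (hflow.pos t ht).ne'
  refine ((hasDerivAt_id t).add ((hflow.hasDerivAt_profile t ht).log hH)).congr_deriv ?_
  field_simp
  ring

lemma exists_tendsto_add_log_profile (hflow : IsSteadyFlow m t₀ H z) {P C : ℝ} (hP : P < 1)
    (hzH : ∀ᶠ t in atTop, z t * H t ≤ P) (hz : ∀ᶠ t in atTop, |z t| ≤ C) :
    ∃ L, Tendsto (fun t ↦ t + Real.log (H t)) atTop (𝓝 L) := by
  refine exists_tendsto_of_norm_deriv_le_neg_deriv
    ((eventually_ge_atTop t₀).mono fun t ht ↦ hflow.hasDerivAt_add_log_profile ht)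
    (hflow.eventually_hasDerivAt_profile.mono fun t ht ↦ ht.const_mul (C / (1 - P))) ?_
    ((hflow.tendsto_profile hP hzH).const_mul _)
  filter_upwards [hflow.eventually_pos, hzH, hz] with t hpos hle habs
  have hP' : 0 < 1 - P := sub_pos.2 hP
  have hC : 0 ≤ C := (abs_nonneg _).trans habs
  calc ‖z t * H t‖ = |z t| * H t := by rw [Real.norm_eq_abs, abs_mul, abs_of_pos hpos]
    _ ≤ C * H t := by gcongr
    _ = C / (1 - P) * ((1 - P) * H t) := by field_simp
    _ ≤ C / (1 - P) * ((1 - z t * H t) * H t) := by gcongr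
    _ = -(C / (1 - P) * ((z t * H t - 1) * H t)) := by ring

theorem exists_tendsto (hflow : IsSteadyFlow m t₀ H z) (hm : 0 < m) (hH : H t₀ < 1)
    (hzH : z t₀ * H t₀ < 1) :
    ∃ b, 0 < b ∧ Tendsto (fun t ↦ Real.exp t * H t) atTop (𝓝 b) ∧
      Tendsto z atTop (𝓝 ((m - 3) / m)) := by
  obtain ⟨K, P, hP, hbound⟩ := hflow.exists_ratio_le_and_ratio_mul_profile_le hm hH hzH
  have hz_le : ∀ᶠ t in atTop, z t ≤ K := (eventually_ge_atTop t₀).mono fun t ht ↦ (hbound t ht).1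
  have hzH_le : ∀ᶠ t in atTop, z t * H t ≤ P :=
    (eventually_ge_atTop t₀).mono fun t ht ↦ (hbound t ht).2
  have hH_lim : Tendsto H atTop (𝓝 0) := hflow.tendsto_profile hP hzH_le
  obtain ⟨C, hz_abs⟩ := hflow.exists_eventually_abs_ratio_le hm hH_lim hz_le
  obtain ⟨L, hL⟩ := hflow.exists_tendsto_add_log_profile hP hzH_le hz_abs
  refine ⟨Real.exp L, Real.exp_pos L, hL.rexp.congr' ?_, hflow.tendsto_ratio hm hH_lim hz_abs⟩
  filter_upwards [hflow.eventually_pos] with t hpos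
  rw [Real.exp_add, Real.exp_log hpos]

end IsSteadyFlow

/-- `h` is a positive, twice differentiable solution on `s` of the steady equation, with a real
dimension parameter `n` and no initial condition. -/
structure IsSteadySolOn (n : ℝ) (s : Set ℝ) (h : ℝ → ℝ) : Prop where
  pos : ∀ r ∈ s, 0 < h r
  differentiableAt : ∀ r ∈ s, DifferentiableAt ℝ h r
  differentiableAt_deriv : ∀ r ∈ s, DifferentiableAt ℝ (deriv h) r
  steady_eq : ∀ r ∈ s, 2 * r ^ 2 * h r * deriv (deriv h) r =
    (n - 1) * h r * (h r - 1) + r * deriv h r * (r * deriv h r - (n - 1))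

/-- The quantity `(r h)' / h²`, written as `(r h' / h + 1) / h`; it is the second coordinate of
the planar system `IsSteadyFlow`. -/
noncomputable def steadyRatio (h : ℝ → ℝ) (r : ℝ) : ℝ := (r * deriv h r / h r + 1) / h r

namespace IsSteadySolOn

variable {n r₀ : ℝ} {s : Set ℝ} {h : ℝ → ℝ}

lemma mono {s' : Set ℝ} (hsol : IsSteadySolOn n s h) (hs : s' ⊆ s) : IsSteadySolOn n s' h where
  pos r hr := hsol.pos r (hs hr)
  differentiableAt r hr := hsol.differentiableAt r (hs hr)
  differentiableAt_deriv r hr := hsol.differentiableAt_deriv r (hs hr)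
  steady_eq r hr := hsol.steady_eq r (hs hr)

lemma hasDerivAt_steadyRatio (hsol : IsSteadySolOn n s h) {r : ℝ} (hr : r ∈ s) (hr₀ : r ≠ 0) :
    HasDerivAt (steadyRatio h) (((n - 1) * (1 - steadyRatio h r) -
      3 * (1 - steadyRatio h r * h r) ^ 2) / (2 * h r) / r) r := by
  have hh : h r ≠ 0 := (hsol.pos r hr).ne'
  have hderiv := (hsol.differentiableAt r hr).hasDerivAt
  have hderiv₂ := (hsol.differentiableAt_deriv r hr).hasDerivAt
  have hsecond : deriv (deriv h) r = ((n - 1) * h r * (h r - 1) +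
      r * deriv h r * (r * deriv h r - (n - 1))) / (2 * r ^ 2 * h r) := by
    rw [← hsol.steady_eq r hr]
    field_simp
  refine (((((hasDerivAt_id' r).fun_mul hderiv₂).fun_div hderiv hh).add_const 1).fun_div
    hderiv hh).congr_deriv ?_
  rw [hsecond, steadyRatio]
  field_simp
  ring

lemma isSteadyFlow (hsol : IsSteadySolOn n (Ici r₀) h) (hr₀ : 0 < r₀) :
    IsSteadyFlow (n - 1) (Real.log r₀) (fun t ↦ h (Real.exp t))
      (fun t ↦ steadyRatio h (Real.exp t)) where
  pos t ht := hsol.pos _ ((Real.log_le_iff_le_exp hr₀).1 ht)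
  hasDerivAt_profile t ht := by
    have hmem : Real.exp t ∈ Ici r₀ := (Real.log_le_iff_le_exp hr₀).1 ht
    have hh := (hsol.pos _ hmem).ne'
    refine ((hsol.differentiableAt _ hmem).hasDerivAt.comp t (Real.hasDerivAt_exp t)).congr_deriv ?_
    rw [steadyRatio]
    field_simp
    ring
  hasDerivAt_ratio t ht := by
    have hmem : Real.exp t ∈ Ici r₀ := (Real.log_le_iff_le_exp hr₀).1 ht
    refine ((hsol.hasDerivAt_steadyRatio hmem (Real.exp_ne_zero t)).comp t
      (Real.hasDerivAt_exp t)).congr_deriv ?_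
    exact div_mul_cancel₀ _ (Real.exp_ne_zero t)

end IsSteadySolOn

namespace IsSteadySol

variable {n : ℕ} {μ₁ : ℝ} {h : ℝ → ℝ}

lemma isSteadySolOn (hsol : IsSteadySol n μ₁ h) : IsSteadySolOn n (Ioi 0) h where
  pos r hr := (hsol.2.2.1 r hr).2
  differentiableAt _ hr := (hsol.1.differentiableOn two_ne_zero).differentiableAt (Ioi_mem_nhds hr)
  differentiableAt_deriv _ hr :=
    ((hsol.1.deriv_of_isOpen (m := 1) isOpen_Ioi one_add_one_eq_two.le).differentiableOn
      one_ne_zero).differentiableAt (Ioi_mem_nhds hr)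
  steady_eq r hr := (hsol.2.2.1 r hr).1

lemma exists_lt_one_and_deriv_neg (hsol : IsSteadySol n μ₁ h) (hμ : μ₁ < 0) :
    ∃ r₀, 0 < r₀ ∧ h r₀ < 1 ∧ deriv h r₀ < 0 := by
  obtain ⟨-, hC1, -, hzero, hderiv⟩ := hsol
  have hnear := eventually_lt_and_deriv_neg_of_derivWithin_neg hC1 (hderiv ▸ hμ)
  rw [hzero] at hnear
  exact (eventually_mem_nhdsWithin.and hnear).exists

end IsSteadySol

theorem steady_rh_limit_general {n r₀ : ℝ} (hn : 1 < n) {h : ℝ → ℝ}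
    (hsol : IsSteadySolOn n (Ici r₀) h) (hr₀ : 0 < r₀) (hlt : h r₀ < 1)
    (hneg : deriv h r₀ < 0) :
    ∃ b₁ : ℝ, 0 < b₁ ∧ Tendsto (fun r ↦ r * h r) atTop (𝓝 b₁) ∧
      Tendsto (fun r ↦ r * (r * deriv h r / h r + 1)) atTop (𝓝 ((n - 4) / (n - 1) * b₁)) := by
  have hh₀ : 0 < h r₀ := hsol.pos r₀ self_mem_Ici
  have hratio : steadyRatio h r₀ * h r₀ < 1 := by
    rw [steadyRatio, div_mul_cancel₀ _ hh₀.ne', add_lt_iff_neg_right]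
    exact div_neg_of_neg_of_pos (mul_neg_of_pos_of_neg hr₀ hneg) hh₀
  obtain ⟨b, hb, hrh, hz⟩ := (hsol.isSteadyFlow hr₀).exists_tendsto (sub_pos.2 hn)
    (by simpa only [Real.exp_log hr₀] using hlt) (by simpa only [Real.exp_log hr₀] using hratio)
  have hrh' : Tendsto (fun r ↦ r * h r) atTop (𝓝 b) := Real.tendsto_comp_exp_atTop.1 hrh
  refine ⟨b, hb, hrh', ?_⟩
  rw [show n - 4 = n - 1 - 3 by ring]
  refine ((Real.tendsto_comp_exp_atTop.1 hz).mul hrh').congr' ?_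
  filter_upwards [eventually_ge_atTop r₀] with r hr
  have hh : h r ≠ 0 := (hsol.pos r hr).ne'
  rw [steadyRatio]
  field_simp

theorem steady_rh_limit (μ₁ : ℝ) (n : ℕ) (hμ : μ₁ < 0) (hn2 : 2 ≤ n)
    (h : ℝ → ℝ) (hsol : IsSteadySol n μ₁ h) :
    ∃ b₁ : ℝ, 0 ≤ b₁ ∧
      Filter.Tendsto (fun r : ℝ => r * h r) Filter.atTop (nhds b₁) ∧
      (4 ≤ n → 0 < b₁) ∧
      Filter.Tendsto (fun r : ℝ => r * (r * deriv h r / h r + 1)) Filter.atTop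
        (nhds ((((n : ℝ) - 4) / ((n : ℝ) - 1)) * b₁)) := by
  obtain ⟨r₀, hr₀, hlt, hneg⟩ := hsol.exists_lt_one_and_deriv_neg hμ
  obtain ⟨b, hb, hrh, hslope⟩ := steady_rh_limit_general (Nat.one_lt_cast.2 hn2)
    (hsol.isSteadySolOn.mono (Ici_subset_Ioi.2 hr₀)) hr₀ hlt hneg
  exact ⟨b, hb.le, hrh, fun _ ↦ hb, hslope⟩
end

section
/- Let λ > 0, let n ≥ 2 be an integer, and suppose μ₁ > λ/n. Suppose h ∈ C²((0,∞)) ∩ C¹([0,∞)) is a solution of 2r²h(r)h''(r) = (n-1)h(r)(h(r)-1) + r h'(r)(r h'(r) - λr - (n-1)), h(r) > 0 for r > 0, with h(0) = 1 and h'(0) = μ₁. Then h'(r) → ∞ and h(r) → ∞ as r → ∞, and h(r) ≥ 1 + μ₁ r for all r > 0. -/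
open Set Filter Topology

/-- `h` is a solution of the initial value problem
`2r²h h'' = (n-1)h(h-1) + r h'(r h' - λr - (n-1))`, `h > 0` on `(0,∞)`,
with `h ∈ C²((0,∞)) ∩ C¹([0,∞))`, `h(0) = 1` and `h'(0) = μ₁`. -/
def IsSol (n : ℕ) (lam μ₁ : ℝ) (h : ℝ → ℝ) : Prop :=
  ContDiffOn ℝ 2 h (Set.Ioi 0) ∧ ContDiffOn ℝ 1 h (Set.Ici 0) ∧
  (∀ r : ℝ, 0 < r →
    2 * r ^ 2 * h r * deriv (deriv h) r =
      ((n : ℝ) - 1) * h r * (h r - 1) +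
        r * deriv h r * (r * deriv h r - lam * r - ((n : ℝ) - 1)) ∧ 0 < h r) ∧
  h 0 = 1 ∧ derivWithin h (Set.Ici 0) 0 = μ₁

/-!
Let `q r = (h r - 1) / r` be the slope of the chord from `(0, 1)` to `(r, h r)` and let
`d = h' - q`. The singular second-order equation becomes the first-order system
`r q' = d`, `2 r h d' = r (q (N q - λ) + d² - λ d) - (N + 1) d`, with `q → μ` and `d → 0` at `0⁺`.
Since `μ (N μ - λ) > 0`, `d` leaves `0` upwards. While `d > 0`, `q` increases, so `q ≥ μ`; if `d`
came back to `0`, the second equation would give `d' > 0` there, which is absurd. Hence `d > 0` and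
`q ≥ μ`, that is `h ≥ 1 + μ r`. The same barrier argument at a small level `c > 0` gives `d > c` on
`[1, ∞)`, so `q' > c / r` and `q` grows at least like `c log r`; finally `h' = q + d > q`.
-/

section Calculus

variable {f f' : ℝ → ℝ} {a b c : ℝ}

theorem eventually_nhdsLT_lt_of_hasDerivAt_pos {x m : ℝ} (hf : HasDerivAt f m x) (hm : 0 < m) :
    ∀ᶠ y in 𝓝[<] x, f y < f x := by
  have hslope : ∀ᶠ y in 𝓝[<] x, 0 < slope f x y :=
    (hasDerivAt_iff_tendsto_slope_left_right.1 hf).1.eventually_const_lt hm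
  filter_upwards [hslope, self_mem_nhdsWithin] with y hy hyx
  rw [slope_comm, slope_pos_iff_of_le (le_of_lt hyx)] at hy
  exact hy

theorem lt_of_hasDerivAt_pos_of_first_hit (hab : a < b)
    (hf : ∀ x ∈ Ioc a b, HasDerivAt f (f' x) x) (hstart : ∀ᶠ x in 𝓝[>] a, c < f x)
    (hhit : ∀ x ∈ Ioc a b, f x = c → (∀ y ∈ Ioo a x, c < f y) → 0 < f' x) : c < f b := by
  by_contra! hb
  obtain ⟨e, hae, he⟩ := mem_nhdsGT_iff_exists_Ioc_subset.1 hstart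
  have hcont : ContinuousOn f (Icc e b) := fun x hx =>
    (hf x ⟨lt_of_lt_of_le hae hx.1, hx.2⟩).continuousAt.continuousWithinAt
  have heb : e ≤ b := by
    by_contra! hbe
    exact hb.not_gt (he ⟨hab, hbe.le⟩)
  have hcompact : IsCompact (Icc e b ∩ f ⁻¹' Iic c) := isCompact_Icc.of_isClosed_subset
    (hcont.preimage_isClosed_of_isClosed isClosed_Icc isClosed_Iic) inter_subset_left
  obtain ⟨s, ⟨⟨hes, hsb⟩, hsc⟩, hleast⟩ := hcompact.exists_isLeast ⟨b, right_mem_Icc.2 heb, hb⟩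
  have has : a < s := lt_of_lt_of_le hae hes
  have hbefore : ∀ y ∈ Ioo a s, c < f y := by
    intro y hy
    rcases le_or_gt y e with hye | hey
    · exact he ⟨hy.1, hye⟩
    · by_contra! hyc
      exact hy.2.not_ge (hleast ⟨⟨hey.le, hy.2.le.trans hsb⟩, hyc⟩)
  have hleft : ∀ᶠ y in 𝓝[<] s, c < f y := by
    filter_upwards [Ioo_mem_nhdsLT has] with y hy using hbefore y hy
  have hderiv := hf s ⟨has, hsb⟩
  have hfs : f s = c := le_antisymm hsc <|
    ge_of_tendsto (hderiv.continuousAt.tendsto.mono_left nhdsWithin_le_nhds)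
      (hleft.mono fun _ hy => hy.le)
  obtain ⟨y, hcy, hys⟩ := (hleft.and (eventually_nhdsLT_lt_of_hasDerivAt_pos hderiv
    (hhit s ⟨has, hsb⟩ hfs hbefore))).exists
  exact (hcy.trans hys).ne' hfs

theorem eventually_nhdsGT_lt_of_hasDerivAt_pos_of_le (hlim : Tendsto f (𝓝[>] a) (𝓝 c))
    (hf : ∀ᶠ x in 𝓝[>] a, HasDerivAt f (f' x) x)
    (hpos : ∀ᶠ x in 𝓝[>] a, f x ≤ c → 0 < f' x) : ∀ᶠ x in 𝓝[>] a, c < f x := by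
  obtain ⟨e, hae, he⟩ := mem_nhdsGT_iff_exists_Ioo_subset.1 (hf.and hpos)
  have hge : ∀ x ∈ Ioo a e, c ≤ f x := by
    refine fun x hx => le_of_forall_lt fun l hl => ?_
    refine lt_of_hasDerivAt_pos_of_first_hit hx.1
      (fun y hy => (he ⟨hy.1, hy.2.trans_lt hx.2⟩).1) (hlim.eventually_const_lt hl) ?_
    exact fun y hy hyl _ => (he ⟨hy.1, hy.2.trans_lt hx.2⟩).2 (hyl.trans_le hl.le)
  filter_upwards [Ioo_mem_nhdsGT hae] with x hx
  refine (hge x hx).lt_of_ne' fun hfx => ?_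
  obtain ⟨y, hyx, hay⟩ := ((eventually_nhdsLT_lt_of_hasDerivAt_pos (he hx).1
    ((he hx).2 hfx.le)).and (Ioo_mem_nhdsLT hx.1)).exists
  exact (hyx.trans_le hfx.le).not_ge (hge y ⟨hay.1, hay.2.trans hx.2⟩)

theorem tendsto_atTop_of_div_le_hasDerivAt (hc : 0 < c)
    (hf : ∀ᶠ x in atTop, HasDerivAt f (f' x) x) (hle : ∀ᶠ x in atTop, c / x ≤ f' x) :
    Tendsto f atTop atTop := by
  obtain ⟨A, hA⟩ := eventually_atTop.1 ((hf.and hle).and (eventually_gt_atTop 0))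
  have hderiv : ∀ x ∈ Ici A, HasDerivAt (fun x => f x - c * Real.log x) (f' x - c * x⁻¹) x :=
    fun x hx => (hA x hx).1.1.sub ((Real.hasDerivAt_log (hA x hx).2.ne').const_mul c)
  have hmono : MonotoneOn (fun x => f x - c * Real.log x) (Ici A) := by
    refine monotoneOn_of_hasDerivWithinAt_nonneg (convex_Ici A)
      (fun x hx => (hderiv x hx).continuousAt.continuousWithinAt)
      (fun x hx => (hderiv x (interior_subset hx)).hasDerivWithinAt) fun x hx => ?_
    rw [← div_eq_mul_inv]
    exact sub_nonneg.2 (hA x (interior_subset hx)).1.2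
  have hlog : Tendsto (fun x => (f A - c * Real.log A) + c * Real.log x) atTop atTop :=
    tendsto_atTop_add_const_left _ _ (Real.tendsto_log_atTop.const_mul_atTop hc)
  refine tendsto_atTop_mono' _ ?_ hlog
  filter_upwards [eventually_ge_atTop A] with x hx
  exact le_sub_iff_add_le.1 (hmono self_mem_Ici hx hx)

theorem hasDerivAt_slope {x m : ℝ} (hf : HasDerivAt f m x) (hx : x ≠ a) :
    HasDerivAt (slope f a) ((m - slope f a x) / (x - a)) x := by
  have hxa : x - a ≠ 0 := sub_ne_zero.2 hx
  rw [slope_fun_def_field]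
  refine ((hf.sub_const (f a)).div ((hasDerivAt_id x).sub_const a) hxa).congr_deriv ?_
  simp only [id]
  field_simp

end Calculus

/-- The initial value problem of `IsSol` with a real parameter `N` in place of the integer
dimension `n`. -/
structure IsRealDimSol (N lam μ : ℝ) (h : ℝ → ℝ) : Prop where
  contDiffOn_Ioi : ContDiffOn ℝ 2 h (Ioi 0)
  contDiffOn_Ici : ContDiffOn ℝ 1 h (Ici 0)
  ode : ∀ r, 0 < r → 2 * r ^ 2 * h r * deriv (deriv h) r =
    (N - 1) * h r * (h r - 1) + r * deriv h r * (r * deriv h r - lam * r - (N - 1))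
  pos : ∀ r, 0 < r → 0 < h r
  apply_zero : h 0 = 1
  derivWithin_zero : derivWithin h (Ici 0) 0 = μ

theorem IsSol.isRealDimSol {n : ℕ} {lam μ : ℝ} {h : ℝ → ℝ} (hsol : IsSol n lam μ h) :
    IsRealDimSol n lam μ h :=
  let ⟨hC2, hC1, hode, h0, hμ⟩ := hsol
  ⟨hC2, hC1, fun r hr => (hode r hr).1, fun r hr => (hode r hr).2, h0, hμ⟩

/-- The excess `h' r - (h r - h 0) / r` of the slope of `h` at `r` over the slope of the chord from
`0` to `r`; for a solution it measures how fast the chord slope grows. -/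
noncomputable def slopeGap (h : ℝ → ℝ) (r : ℝ) : ℝ :=
  deriv h r - slope h 0 r

/-- The right-hand side of the equation `2 r h d' = gapDrift N lam r q d` satisfied by the gap `d`
and the chord slope `q` of a solution. -/
def gapDrift (N lam r q d : ℝ) : ℝ :=
  r * (q * (N * q - lam) + d ^ 2 - lam * d) - (N + 1) * d

theorem gapDrift_pos_of_le {N lam μ r q c : ℝ} (hN : 0 ≤ N) (hμ : 0 ≤ μ)
    (hlam : lam ≤ N * μ) (hr : 0 < r)
    (hc : (N + 1) * c < r * (μ * (N * μ - lam) + c ^ 2 - lam * c)) (hq : μ ≤ q) :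
    0 < gapDrift N lam r q c := by
  have hmono : μ * (N * μ - lam) ≤ q * (N * q - lam) := by
    have : 0 ≤ N * μ - lam := sub_nonneg.2 hlam
    gcongr
    exact hμ.trans hq
  refine sub_pos.2 (hc.trans_le ?_)
  gcongr

namespace IsRealDimSol

variable {N lam μ r : ℝ} {h : ℝ → ℝ}

theorem hasDerivAt (hsol : IsRealDimSol N lam μ h) (hr : 0 < r) : HasDerivAt h (deriv h r) r :=
  ((hsol.contDiffOn_Ioi.differentiableOn two_ne_zero).differentiableAt
    (Ioi_mem_nhds hr)).hasDerivAt

theorem hasDerivAt_deriv (hsol : IsRealDimSol N lam μ h) (hr : 0 < r) :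
    HasDerivAt (deriv h) (deriv (deriv h) r) r := by
  have hC1 : ContDiffOn ℝ 1 (deriv h) (Ioi 0) :=
    hsol.contDiffOn_Ioi.deriv_of_isOpen isOpen_Ioi (by norm_num)
  exact ((hC1.differentiableOn one_ne_zero).differentiableAt (Ioi_mem_nhds hr)).hasDerivAt

theorem apply_eq_one_add (hsol : IsRealDimSol N lam μ h) (hr : 0 < r) :
    h r = 1 + r * slope h 0 r := by
  rw [slope_def_field, hsol.apply_zero, sub_zero]
  field_simp
  ring

theorem tendsto_deriv_zero (hsol : IsRealDimSol N lam μ h) :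
    Tendsto (deriv h) (𝓝[>] 0) (𝓝 μ) := by
  have hcont := (hsol.contDiffOn_Ici.continuousOn_derivWithin (uniqueDiffOn_Ici 0) le_rfl)
    0 self_mem_Ici
  rw [ContinuousWithinAt, hsol.derivWithin_zero] at hcont
  refine (hcont.mono_left (nhdsWithin_mono _ Ioi_subset_Ici_self)).congr' ?_
  filter_upwards [self_mem_nhdsWithin] with r hr
  exact derivWithin_of_mem_nhds (Ici_mem_nhds hr)

theorem tendsto_slope_zero (hsol : IsRealDimSol N lam μ h) :
    Tendsto (slope h 0) (𝓝[>] 0) (𝓝 μ) := by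
  have hderiv : HasDerivWithinAt h μ (Ici 0) 0 := hsol.derivWithin_zero ▸
    (hsol.contDiffOn_Ici.differentiableOn one_ne_zero 0 self_mem_Ici).hasDerivWithinAt
  exact (hasDerivWithinAt_iff_tendsto_slope' self_notMem_Ioi).1 hderiv.Ioi_of_Ici

theorem tendsto_slopeGap_zero (hsol : IsRealDimSol N lam μ h) :
    Tendsto (slopeGap h) (𝓝[>] 0) (𝓝 0) := by
  have hlim := hsol.tendsto_deriv_zero.sub hsol.tendsto_slope_zero
  rw [sub_self] at hlim
  exact hlim

theorem hasDerivAt_slope_zero (hsol : IsRealDimSol N lam μ h) (hr : 0 < r) :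
    HasDerivAt (slope h 0) (slopeGap h r / r) r := by
  simpa only [slopeGap, sub_zero] using hasDerivAt_slope (hsol.hasDerivAt hr) hr.ne'

theorem hasDerivAt_slopeGap (hsol : IsRealDimSol N lam μ h) (hr : 0 < r) :
    HasDerivAt (slopeGap h) (gapDrift N lam r (slope h 0 r) (slopeGap h r) / (2 * r * h r)) r := by
  refine ((hsol.hasDerivAt_deriv hr).sub (hsol.hasDerivAt_slope_zero hr)).congr_deriv ?_
  have hdrift : r * gapDrift N lam r (slope h 0 r) (slopeGap h r) =
      2 * r * h r * (r * deriv (deriv h) r - slopeGap h r) := by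
    have hode := hsol.ode r hr
    rw [hsol.apply_eq_one_add hr] at hode ⊢
    unfold gapDrift slopeGap
    linear_combination -hode
  have hhr := hsol.pos r hr
  field_simp
  refine mul_left_cancel₀ hr.ne' ?_
  linear_combination -hdrift

theorem eventually_slopeGap_pos (hsol : IsRealDimSol N lam μ h) (hN : 0 ≤ N) (hμ : 0 < μ)
    (hlam : lam < N * μ) : ∀ᶠ r in 𝓝[>] 0, 0 < slopeGap h r := by
  have hlim : Tendsto (fun r => slope h 0 r * (N * slope h 0 r - lam) + slopeGap h r ^ 2
      - lam * slopeGap h r) (𝓝[>] 0) (𝓝 (μ * (N * μ - lam) + 0 ^ 2 - lam * 0)) :=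
    ((hsol.tendsto_slope_zero.mul ((hsol.tendsto_slope_zero.const_mul N).sub_const lam)).add
      (hsol.tendsto_slopeGap_zero.pow 2)).sub (hsol.tendsto_slopeGap_zero.const_mul lam)
  have hlim_pos : 0 < μ * (N * μ - lam) + 0 ^ 2 - lam * 0 := by
    simpa using mul_pos hμ (sub_pos.2 hlam)
  refine eventually_nhdsGT_lt_of_hasDerivAt_pos_of_le hsol.tendsto_slopeGap_zero
    (eventually_mem_nhdsWithin.mono fun r hr => hsol.hasDerivAt_slopeGap hr) ?_
  filter_upwards [self_mem_nhdsWithin, hlim.eventually_const_lt hlim_pos] with r hr hbracket hgap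
  have hr : 0 < r := hr
  have hdrift : 0 < gapDrift N lam r (slope h 0 r) (slopeGap h r) :=
    sub_pos.2 ((mul_nonpos_of_nonneg_of_nonpos (by positivity) hgap).trans_lt
      (mul_pos hr hbracket))
  have hhr := hsol.pos r hr
  positivity

theorem le_slope_of_slopeGap_nonneg (hsol : IsRealDimSol N lam μ h) (hr : 0 < r)
    (hgap : ∀ y ∈ Ioo 0 r, 0 ≤ slopeGap h y) : μ ≤ slope h 0 r := by
  have hmono : MonotoneOn (slope h 0) (Ioc 0 r) := by
    refine monotoneOn_of_hasDerivWithinAt_nonneg (convex_Ioc 0 r)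
      (fun y hy => (hsol.hasDerivAt_slope_zero hy.1).continuousAt.continuousWithinAt)
      (fun y hy => (hsol.hasDerivAt_slope_zero (interior_subset hy).1).hasDerivWithinAt) ?_
    rw [interior_Ioc]
    exact fun y hy => div_nonneg (hgap y hy) hy.1.le
  refine le_of_tendsto hsol.tendsto_slope_zero ?_
  filter_upwards [Ioc_mem_nhdsGT hr] with y hy
  exact hmono hy (right_mem_Ioc.2 hr) hy.2

theorem slopeGap_pos (hsol : IsRealDimSol N lam μ h) (hN : 0 ≤ N) (hμ : 0 < μ)
    (hlam : lam < N * μ) (hr : 0 < r) : 0 < slopeGap h r := by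
  refine lt_of_hasDerivAt_pos_of_first_hit hr (fun x hx => hsol.hasDerivAt_slopeGap hx.1)
    (hsol.eventually_slopeGap_pos hN hμ hlam) fun x ⟨hx, _⟩ hzero hbefore => ?_
  have hslope : μ ≤ slope h 0 x :=
    hsol.le_slope_of_slopeGap_nonneg hx fun y hy => (hbefore y hy).le
  have hdrift : 0 < gapDrift N lam x (slope h 0 x) (slopeGap h x) := by
    rw [hzero]
    refine gapDrift_pos_of_le hN hμ.le hlam.le hx ?_ hslope
    simpa using mul_pos hx (mul_pos hμ (sub_pos.2 hlam))
  have hhx := hsol.pos x hx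
  positivity

theorem le_slope (hsol : IsRealDimSol N lam μ h) (hN : 0 ≤ N) (hμ : 0 < μ)
    (hlam : lam < N * μ) (hr : 0 < r) : μ ≤ slope h 0 r :=
  hsol.le_slope_of_slopeGap_nonneg hr fun _ hy => (hsol.slopeGap_pos hN hμ hlam hy.1).le

theorem one_add_mul_le (hsol : IsRealDimSol N lam μ h) (hN : 0 ≤ N) (hμ : 0 < μ)
    (hlam : lam < N * μ) (hr : 0 < r) : 1 + μ * r ≤ h r := by
  rw [hsol.apply_eq_one_add hr, mul_comm μ]
  gcongr
  exact hsol.le_slope hN hμ hlam hr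

theorem exists_pos_forall_lt_slopeGap (hsol : IsRealDimSol N lam μ h) (hN : 0 ≤ N) (hμ : 0 < μ)
    (hlam : lam < N * μ) : ∃ c > 0, ∀ r > 1, c < slopeGap h r := by
  have hsmall : ∀ᶠ c in 𝓝[>] (0 : ℝ), (N + 1) * c < μ * (N * μ - lam) + c ^ 2 - lam * c := by
    refine nhdsWithin_le_nhds (ContinuousAt.eventually_lt (by fun_prop) (by fun_prop) ?_)
    simpa using mul_pos hμ (sub_pos.2 hlam)
  obtain ⟨c, hc_small, hc, hc_lt⟩ :=
    (hsmall.and (Ioo_mem_nhdsGT (hsol.slopeGap_pos hN hμ hlam one_pos))).exists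
  refine ⟨c, hc, fun r hr => ?_⟩
  refine lt_of_hasDerivAt_pos_of_first_hit hr
    (fun x hx => hsol.hasDerivAt_slopeGap (one_pos.trans hx.1))
    (nhdsWithin_le_nhds ((hsol.hasDerivAt_slopeGap one_pos).continuousAt.eventually_const_lt hc_lt))
    fun x ⟨hx, _⟩ hhit _ => ?_
  have hx0 : 0 < x := one_pos.trans hx
  have hdrift : 0 < gapDrift N lam x (slope h 0 x) (slopeGap h x) := by
    rw [hhit]
    refine gapDrift_pos_of_le hN hμ.le hlam.le hx0 (hc_small.trans_le ?_)
      (hsol.le_slope hN hμ hlam hx0)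
    exact le_mul_of_one_le_left ((by positivity : 0 ≤ (N + 1) * c).trans hc_small.le) hx.le
  have hhx := hsol.pos x hx0
  positivity

theorem tendsto_slope_atTop (hsol : IsRealDimSol N lam μ h) (hN : 0 ≤ N) (hμ : 0 < μ)
    (hlam : lam < N * μ) : Tendsto (slope h 0) atTop atTop := by
  obtain ⟨c, hc, hgap⟩ := hsol.exists_pos_forall_lt_slopeGap hN hμ hlam
  refine tendsto_atTop_of_div_le_hasDerivAt hc
    ((eventually_gt_atTop 0).mono fun r hr => hsol.hasDerivAt_slope_zero hr) ?_
  filter_upwards [eventually_gt_atTop 1] with r hr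
  have := hgap r hr
  gcongr

theorem tendsto_deriv_atTop (hsol : IsRealDimSol N lam μ h) (hN : 0 ≤ N) (hμ : 0 < μ)
    (hlam : lam < N * μ) : Tendsto (deriv h) atTop atTop := by
  refine tendsto_atTop_mono' _ ?_ (hsol.tendsto_slope_atTop hN hμ hlam)
  filter_upwards [eventually_gt_atTop 0] with r hr
  exact (sub_pos.1 (hsol.slopeGap_pos hN hμ hlam hr)).le

theorem tendsto_atTop (hsol : IsRealDimSol N lam μ h) (hN : 0 ≤ N) (hμ : 0 < μ)
    (hlam : lam < N * μ) : Tendsto h atTop atTop := by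
  have hline : Tendsto (fun r => 1 + μ * r) atTop atTop :=
    tendsto_atTop_add_const_left _ _ (tendsto_id.const_mul_atTop hμ)
  refine tendsto_atTop_mono' _ ?_ hline
  filter_upwards [eventually_gt_atTop 0] with r hr using hsol.one_add_mul_le hN hμ hlam hr

end IsRealDimSol

theorem expanding_large_slope_general {N lam μ₁ : ℝ} {h : ℝ → ℝ} (hN : 0 ≤ N) (hμ : 0 < μ₁)
    (hlam : lam < N * μ₁) (hsol : IsRealDimSol N lam μ₁ h) :
    Tendsto (deriv h) atTop atTop ∧ Tendsto h atTop atTop ∧ ∀ r : ℝ, 0 < r → 1 + μ₁ * r ≤ h r :=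
  ⟨hsol.tendsto_deriv_atTop hN hμ hlam, hsol.tendsto_atTop hN hμ hlam,
    fun _ hr => hsol.one_add_mul_le hN hμ hlam hr⟩

theorem expanding_large_slope (lam μ₁ : ℝ) (n : ℕ) (hlam : 0 < lam) (hn2 : 2 ≤ n)
    (hμ : lam / n < μ₁)
    (h : ℝ → ℝ) (hsol : IsSol n lam μ₁ h) :
    Filter.Tendsto (deriv h) Filter.atTop Filter.atTop ∧
    Filter.Tendsto h Filter.atTop Filter.atTop ∧
    ∀ r : ℝ, 0 < r → 1 + μ₁ * r ≤ h r := by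
  have hn : (0 : ℝ) < n := Nat.cast_pos.2 (two_pos.trans_le hn2)
  exact expanding_large_slope_general hn.le ((div_pos hlam hn).trans hμ) ((div_lt_iff₀' hn).1 hμ)
    hsol.isRealDimSol
end
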